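/- For every integer r ≥ 2 and every integer i, the generalized cluster variables satisfy X(i, r) = X(i+1, r-2) + 2 in the field ℚ(x_1,…,x_r). -/

import Mathlib

/-- The ambient field `ℚ(x_1, …, x_r)`, realized as the fraction field of the
polynomial ring over `ℚ` in variables indexed by `ZMod r` (so indices are
automatically read modulo `r`). -/
noncomputable abbrev CyclicField (r : ℕ) : Type :=
  FractionRing (MvPolynomial (ZMod r) ℚ)

/-- The variable `x_i` for `i : ℤ`, with `x_{i+r} = x_i`. -/
noncomputable def xv (r : ℕ) (i : ℤ) : CyclicField r :=
  algebraMap (MvPolynomial (ZMod r) ℚ) (CyclicField r) (MvPolynomial.X (i : ZMod r))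

/-- The generalized cluster variable `X(l, n)` (the image of the indecomposable
nilpotent representation `E_l[n]` under the Caldero–Chapoton map):
`X(l,0) = 1` and, for `n ≥ 1`,
`X(l,n) = x_{l+n}/x_l + Σ_{k=1}^{n-1} (x_{l+n}·x_{l+r-1})/(x_{l+k-1}·x_{l+k}) + x_{l+r-1}/x_{l+n-1}`. -/
noncomputable def Xgcv (r : ℕ) (l : ℤ) : ℕ → CyclicField r
  | 0 => 1
  | n + 1 =>
      xv r (l + n + 1) / xv r l
        + ∑ k ∈ Finset.Icc 1 n,
            (xv r (l + n + 1) * xv r (l + r - 1)) / (xv r (l + k - 1) * xv r (l + k))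
        + xv r (l + r - 1) / xv r (l + n)

theorem xv_ne_zero (r : ℕ) (i : ℤ) : xv r i ≠ 0 := by
  unfold xv
  rw [Ne, FaithfulSMul.algebraMap_eq_zero_iff]
  exact MvPolynomial.X_ne_zero _

theorem xv_congr (r : ℕ) (i j c : ℤ) (h : i = j + c * r) : xv r i = xv r j := by
  unfold xv
  subst h
  simp

/-- `X(i, r) = X(i+1, r-2) + 2` for every `r ≥ 2` and every integer `i`. -/
theorem stmt7 (r : ℕ) (hr : 2 ≤ r) (i : ℤ) :
    Xgcv r i r = Xgcv r (i + 1) (r - 2) + 2 := by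
  obtain ⟨m, rfl⟩ : ∃ m, r = m + 2 := ⟨r - 2, by omega⟩
  cases m with
  | zero =>
    have h1 : xv 2 (i + 1 + 1) = xv 2 i := xv_congr _ _ _ 1 (by push_cast; ring)
    have h2 : xv 2 (i + 2 - 1) = xv 2 (i + 1) := xv_congr _ _ _ 0 (by push_cast; ring)
    have n0 := xv_ne_zero 2 i
    have n1 := xv_ne_zero 2 (i + 1)
    simp [Xgcv, h1, h2]
    field_simp
    norm_num
  | succ m =>
    have e : m + 1 + 2 - 2 = m + 1 := by omega
    rw [e]
    generalize hR : m + 1 + 2 = R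
    have hRZ : (R : ℤ) = m + 3 := by rw [← hR]; push_cast; ring
    have n0 := xv_ne_zero R
    have hX : Xgcv R i R = Xgcv R i (m + 2 + 1) := by rw [← hR]
    rw [hX]
    simp only [Xgcv]
    have a1 : xv R (i + ((m + 2 : ℕ) : ℤ) + 1) = xv R i :=
      xv_congr _ _ _ 1 (by rw [hRZ]; push_cast; ring)
    have a2 : xv R (i + ((m + 2 : ℕ) : ℤ)) = xv R (i + R - 1) :=
      xv_congr _ _ _ 0 (by rw [hRZ]; push_cast; ring)
    have a3 : xv R (i + 1 + (m : ℤ) + 1) = xv R (i + R - 1) :=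
      xv_congr _ _ _ 0 (by rw [hRZ]; ring)
    have a4 : xv R (i + 1 + R - 1) = xv R i :=
      xv_congr _ _ _ 1 (by ring)
    rw [a1, a2, a3, a4, div_self (n0 _), div_self (n0 _)]
    have hs : ∀ (n : ℕ) (f : ℕ → CyclicField R),
        ∑ k ∈ Finset.Icc 1 n, f k = ∑ k ∈ Finset.range n, f (k + 1) := by
      intro n f
      rw [Finset.range_eq_Ico, Finset.sum_Ico_add' f 0 n 1]
      rfl
    rw [hs, hs, Finset.sum_range_succ, Finset.sum_range_succ']
    have b : ∀ k : ℕ, xv R i * xv R (i + R - 1) /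
          (xv R (i + ((k + 1 + 1 : ℕ) : ℤ) - 1) * xv R (i + ((k + 1 + 1 : ℕ) : ℤ)))
        = xv R (i + R - 1) * xv R i /
          (xv R (i + 1 + ((k + 1 : ℕ) : ℤ) - 1) * xv R (i + 1 + ((k + 1 : ℕ) : ℤ))) := by
      intro k
      have c1 : i + ((k + 1 + 1 : ℕ) : ℤ) = i + 1 + ((k + 1 : ℕ) : ℤ) := by push_cast; ring
      rw [c1, mul_comm (xv R i)]
    rw [Finset.sum_congr rfl (fun k _ => b k)]
    have d1 : i + ((0 + 1 : ℕ) : ℤ) - 1 = i := by push_cast; ring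
    have d2 : i + ((0 + 1 : ℕ) : ℤ) = i + 1 := by push_cast; ring
    have d3 : i + ((m + 1 + 1 : ℕ) : ℤ) - 1 = i + 1 + m := by push_cast; ring
    have d4 : i + ((m + 1 + 1 : ℕ) : ℤ) = i + R - 1 := by rw [hRZ]; push_cast; ring
    rw [d1, d2, d3, d4, mul_div_mul_left _ _ (n0 i), mul_div_mul_right _ _ (n0 (i + R - 1))]
    ring
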